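/- arXiv:2106.13856 — 5 statements merged into one kernel-verified Lean document; each statement's English description precedes it below -/
import Mathlib

section
/- Under Assumption 1 on the value distribution and non-degenerate beliefs, the equilibrium bidding strategy β(v) = v − (∫_{v̲}^{v} A₁(G(x)) dx)/A₁(G(v)) satisfies β(v) < v and β'(v) > 0 for every v ∈ (v̲, v̄]; in particular, β is strictly increasing on (v̲, v̄]. (Bid shading and strict monotonicity of the equilibrium strategy.) -/
open MeasureTheory Set Filter

noncomputable section

/-- `A₁(u) = ∑_{m=1}^M p_m u^(m-1)`. -/
def A1 (M : ℕ) (p : ℕ → ℝ) (u : ℝ) : ℝ := ∑ m ∈ Finset.Icc 1 M, p m * u ^ (m - 1)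

/-- `A₂(u) = u A₁(u)`. -/
def A2 (M : ℕ) (p : ℕ → ℝ) (u : ℝ) : ℝ := u * A1 M p u

/-- `A₃(u) = (1-u) A₁(u)`. -/
def A3 (M : ℕ) (p : ℕ → ℝ) (u : ℝ) : ℝ := (1 - u) * A1 M p u

/-- `A(u) = A₁(u)/A₁'(u)`. -/
def Afun (M : ℕ) (p : ℕ → ℝ) (u : ℝ) : ℝ := A1 M p u / deriv (A1 M p) u

/-- Assumption 1: the value distribution `G` is a CDF supported on `[v̲, v̄]` with
`0 ≤ v̲ < v̄ < ∞`, twice continuously differentiable there, with density `g = G' > 0`. -/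
structure Assumption1 (G g : ℝ → ℝ) (vlo vhi : ℝ) : Prop where
  lo_nonneg : 0 ≤ vlo
  lo_lt_hi : vlo < vhi
  mono : Monotone G
  eq_zero : ∀ x ≤ vlo, G x = 0
  eq_one : ∀ x, vhi ≤ x → G x = 1
  smooth : ContDiffOn ℝ 2 G (Set.Icc vlo vhi)
  hasDeriv : ∀ x ∈ Set.Icc vlo vhi, HasDerivWithinAt G (g x) (Set.Icc vlo vhi) x
  density_pos : ∀ x ∈ Set.Icc vlo vhi, 0 < g x

/-- Non-degenerate symmetric beliefs `p₁, …, p_M` about the number of active bidders. -/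
structure Beliefs (M : ℕ) (p : ℕ → ℝ) : Prop where
  nonneg : ∀ m, 0 ≤ p m
  sum_one : ∑ m ∈ Finset.Icc 1 M, p m = 1
  nondegen : 0 < ∑ m ∈ Finset.Icc 2 M, p m


/-- The equilibrium bidding strategy `β(v) = v - (∫_{v̲}^v A₁(G(x)) dx)/A₁(G(v))`. -/
def betaRaw (M : ℕ) (p : ℕ → ℝ) (G : ℝ → ℝ) (vlo : ℝ) (x : ℝ) : ℝ :=
  x - (∫ t in vlo..x, A1 M p (G t)) / A1 M p (G x)

theorem aux_hasDerivAt (M : ℕ) (p : ℕ → ℝ) (u : ℝ) :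
    HasDerivAt (A1 M p)
      (∑ m ∈ Finset.Icc 1 M, p m * (((m - 1 : ℕ) : ℝ) * u ^ (m - 1 - 1))) u := by
  unfold A1
  apply HasDerivAt.fun_sum
  intro m _
  exact (hasDerivAt_pow (m - 1) u).const_mul (p m)

theorem aux_pos (M : ℕ) (p : ℕ → ℝ) (hbel : Beliefs M p) (u : ℝ) (hu : 0 < u) :
    0 < A1 M p u ∧
      0 < ∑ m ∈ Finset.Icc 1 M, p m * (((m - 1 : ℕ) : ℝ) * u ^ (m - 1 - 1)) := by
  obtain ⟨k, hk, hpk⟩ := Finset.exists_lt_of_sum_lt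
    (s := Finset.Icc 2 M) (f := fun _ => (0 : ℝ)) (g := p) (by simpa using hbel.nondegen)
  rw [Finset.mem_Icc] at hk
  have hk1 : k ∈ Finset.Icc 1 M := by rw [Finset.mem_Icc]; omega
  constructor
  · refine Finset.sum_pos' (fun m _ => mul_nonneg (hbel.nonneg m) (by positivity)) ⟨k, hk1, ?_⟩
    exact mul_pos hpk (by positivity)
  · refine Finset.sum_pos' (fun m _ => mul_nonneg (hbel.nonneg m) (by positivity)) ⟨k, hk1, ?_⟩
    have : (0 : ℝ) < ((k - 1 : ℕ) : ℝ) := by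
      exact_mod_cast (by omega : 0 < k - 1)
    exact mul_pos hpk (by positivity)

theorem aux_cont (G g : ℝ → ℝ) (vlo vhi : ℝ) (hG : Assumption1 G g vlo vhi) :
    Continuous G := by
  have h := (hG.smooth.continuousOn).domRestrict
  have h2 : Continuous (Set.IccExtend hG.lo_lt_hi.le ((Set.Icc vlo vhi).domRestrict G)) :=
    h.Icc_extend'
  convert h2 using 1
  ext x
  rcases le_total x vlo with hx | hx
  · rw [Set.IccExtend_of_le_left _ _ hx]
    exact (hG.eq_zero x hx).trans (hG.eq_zero vlo le_rfl).symm
  · rcases le_total x vhi with hx' | hx'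
    · rw [Set.IccExtend_of_mem _ _ ⟨hx, hx'⟩]
      rfl
    · rw [Set.IccExtend_of_right_le _ _ hx']
      exact (hG.eq_one x hx').trans (hG.eq_one vhi le_rfl).symm

theorem aux_G_pos (G g : ℝ → ℝ) (vlo vhi : ℝ) (hG : Assumption1 G g vlo vhi) (v : ℝ)
    (hv : v ∈ Set.Ioc vlo vhi) : 0 < G v := by
  have hs : StrictMonoOn G (Set.Icc vlo vhi) := by
    refine strictMonoOn_of_hasDerivWithinAt_pos (f' := g) (convex_Icc _ _)
      (aux_cont G g vlo vhi hG).continuousOn ?_ ?_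
    · intro x hx
      exact (hG.hasDeriv x (interior_subset hx)).mono interior_subset
    · intro x hx
      exact hG.density_pos x (interior_subset hx)
  have := hs ⟨le_rfl, hG.lo_lt_hi.le⟩ ⟨hv.1.le, hv.2⟩ hv.1
  rwa [hG.eq_zero vlo le_rfl] at this

theorem aux_int_pos (M : ℕ) (p : ℕ → ℝ) (hbel : Beliefs M p)
    (G g : ℝ → ℝ) (vlo vhi : ℝ) (hG : Assumption1 G g vlo vhi) (v : ℝ)
    (hv : v ∈ Set.Ioc vlo vhi) : 0 < ∫ t in vlo..v, A1 M p (G t) := by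
  have hc : Continuous (fun t => A1 M p (G t)) :=
    (continuous_iff_continuousAt.2 fun u => (aux_hasDerivAt M p u).continuousAt).comp
      (aux_cont G g vlo vhi hG)
  refine intervalIntegral.intervalIntegral_pos_of_pos_on (hc.intervalIntegrable _ _) ?_ hv.1
  intro x hx
  exact (aux_pos M p hbel _ (aux_G_pos G g vlo vhi hG x ⟨hx.1, hx.2.le.trans hv.2⟩)).1

theorem aux_beta (M : ℕ) (p : ℕ → ℝ) (hbel : Beliefs M p)
    (G g : ℝ → ℝ) (vlo vhi : ℝ) (hG : Assumption1 G g vlo vhi) (v : ℝ)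
    (hv : v ∈ Set.Ioc vlo vhi) :
    ∃ d, 0 < d ∧ HasDerivWithinAt (betaRaw M p G vlo) d (Set.Ioc vlo vhi) v := by
  have hc : Continuous (fun t => A1 M p (G t)) :=
    (continuous_iff_continuousAt.2 fun u => (aux_hasDerivAt M p u).continuousAt).comp
      (aux_cont G g vlo vhi hG)
  obtain ⟨hA, hD⟩ := aux_pos M p hbel _ (aux_G_pos G g vlo vhi hG v hv)
  have hI := aux_int_pos M p hbel G g vlo vhi hG v hv
  have hg := hG.density_pos v ⟨hv.1.le, hv.2⟩
  have h1 : HasDerivWithinAt (fun x => A1 M p (G x)) _ (Set.Ioc vlo vhi) v :=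
    (aux_hasDerivAt M p (G v)).comp_hasDerivWithinAt v
      ((hG.hasDeriv v ⟨hv.1.le, hv.2⟩).mono Set.Ioc_subset_Icc_self)
  have h2 : HasDerivWithinAt (fun x => ∫ t in vlo..x, A1 M p (G t)) (A1 M p (G v))
      (Set.Ioc vlo vhi) v :=
    (hc.integral_hasStrictDerivAt vlo v).hasDerivAt.hasDerivWithinAt
  have h3 := (hasDerivWithinAt_id v (Set.Ioc vlo vhi)).sub (h2.div h1 hA.ne')
  refine ⟨_, ?_, h3⟩
  set D := ∑ m ∈ Finset.Icc 1 M, p m * (((m - 1 : ℕ) : ℝ) * (G v) ^ (m - 1 - 1))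
  set I := ∫ t in vlo..v, A1 M p (G t)
  set a := A1 M p (G v)
  have : 1 - (a * a - I * (D * g v)) / a ^ 2 = I * (D * g v) / a ^ 2 := by
    field_simp
    ring
  rw [this]
  positivity

/-- Bid shading and strict monotonicity of the equilibrium strategy: `β(v) < v` and
`β'(v) > 0` for every `v ∈ (v̲, v̄]`; in particular `β` is strictly increasing there. -/
theorem bid_shading_and_strict_monotonicity
    (M : ℕ) (p : ℕ → ℝ) (hM : 2 ≤ M) (hbel : Beliefs M p)
    (G g : ℝ → ℝ) (vlo vhi : ℝ) (hG : Assumption1 G g vlo vhi) :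
    (∀ v ∈ Set.Ioc vlo vhi,
      betaRaw M p G vlo v < v ∧
        0 < derivWithin (betaRaw M p G vlo) (Set.Ioc vlo vhi) v) ∧
    StrictMonoOn (betaRaw M p G vlo) (Set.Ioc vlo vhi) := by
  refine ⟨fun v hv => ⟨?_, ?_⟩, ?_⟩
  · have hA := (aux_pos M p hbel _ (aux_G_pos G g vlo vhi hG v hv)).1
    have hI := aux_int_pos M p hbel G g vlo vhi hG v hv
    have := div_pos hI hA
    unfold betaRaw
    linarith
  · obtain ⟨d, hd, h⟩ := aux_beta M p hbel G g vlo vhi hG v hv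
    rw [h.derivWithin (uniqueDiffOn_Ioc vlo vhi v hv)]
    exact hd
  · choose! d hd h using aux_beta M p hbel G g vlo vhi hG
    refine strictMonoOn_of_hasDerivWithinAt_pos (f' := d) (convex_Ioc _ _)
      (fun x hx => (h x hx).continuousWithinAt) ?_ ?_
    · intro x hx
      exact (h x (interior_subset hx)).mono interior_subset
    · intro x hx
      exact hd x (interior_subset hx)
end
end

section
/- Under Assumption 1 on the value distribution and non-degenerate beliefs, suppose β : [v̲, v̄] → ℝ is continuously differentiable and strictly increasing with β'(v) > 0 on (v̲, v̄], and satisfies the first-order condition β'(v) = (v − β(v))·g(v)/A(G(v)) for all v ∈ (v̲, v̄]. Let F = G ∘ β⁻¹ be the CDF of the equilibrium bid on [β(v̲), β(v̄)], with density f = F'. Then for every bid b ∈ (β(v̲), β(v̄)], the bidder's value is recovered by the inverse bidding strategy formula β⁻¹(b) = b + A(F(b))/f(b). (Identification equation (iden1).) -/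
open MeasureTheory Set Filter

noncomputable section

/-- Identification equation (iden1): for any continuously differentiable, strictly
increasing equilibrium strategy `β` satisfying the first-order condition, with bid CDF
`F = G ∘ β⁻¹` and bid density `f = F'`, the bidder's value is recovered from the bid by
`β⁻¹(b) = b + A(F(b))/f(b)`. -/
theorem inverse_bidding_strategy_identification
    (M : ℕ) (p : ℕ → ℝ) (hM : 2 ≤ M) (hbel : Beliefs M p)
    (G g : ℝ → ℝ) (vlo vhi : ℝ) (hG : Assumption1 G g vlo vhi)
    (β βd : ℝ → ℝ)
    (hβderiv : ∀ x ∈ Set.Icc vlo vhi, HasDerivWithinAt β (βd x) (Set.Icc vlo vhi) x)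
    (hβd_cont : ContinuousOn βd (Set.Icc vlo vhi))
    (hβmono : StrictMonoOn β (Set.Icc vlo vhi))
    (hβd_pos : ∀ x ∈ Set.Ioc vlo vhi, 0 < βd x)
    (hfoc : ∀ x ∈ Set.Ioc vlo vhi, βd x = (x - β x) * g x / Afun M p (G x))
    (βinv : ℝ → ℝ)
    (hβinv_mem : ∀ y ∈ Set.Icc (β vlo) (β vhi), βinv y ∈ Set.Icc vlo vhi)
    (hβinv_left : ∀ x ∈ Set.Icc vlo vhi, βinv (β x) = x)
    (hβinv_right : ∀ y ∈ Set.Icc (β vlo) (β vhi), β (βinv y) = y)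
    (f : ℝ → ℝ)
    (hf : ∀ y ∈ Set.Icc (β vlo) (β vhi),
      HasDerivWithinAt (fun z => G (βinv z)) (f y) (Set.Icc (β vlo) (β vhi)) y) :
    ∀ y ∈ Set.Ioc (β vlo) (β vhi), βinv y = y + Afun M p (G (βinv y)) / f y := by
  intro y hy
  have hyI : y ∈ Set.Icc (β vlo) (β vhi) := ⟨hy.1.le, hy.2⟩
  have hx := hβinv_mem y hyI
  have hβx := hβinv_right y hyI
  have hlt := hG.lo_lt_hi
  have hx' : βinv y ∈ Set.Ioc vlo vhi := by
    refine ⟨lt_of_le_of_ne hx.1 ?_, hx.2⟩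
    intro h
    rw [← h] at hβx
    exact absurd hy.1 (by rw [hβx]; exact lt_irrefl _)
  have hfy := hf y hyI
  generalize βinv y = x at hx hβx hx' ⊢
  subst hβx
  have hmaps : Set.MapsTo β (Set.Icc vlo vhi) (Set.Icc (β vlo) (β vhi)) := by
    intro z hz
    exact ⟨hβmono.monotoneOn (Set.left_mem_Icc.2 hlt.le) hz hz.1,
      hβmono.monotoneOn hz (Set.right_mem_Icc.2 hlt.le) hz.2⟩
  have hc : HasDerivWithinAt ((fun z => G (βinv z)) ∘ β) (f (β x) * βd x)
      (Set.Icc vlo vhi) x := HasDerivWithinAt.comp x hfy (hβderiv x hx) hmaps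
  have hc' : HasDerivWithinAt G (f (β x) * βd x) (Set.Icc vlo vhi) x :=
    hc.congr (fun z hz => by simp [hβinv_left z hz]) (by simp [hβinv_left x hx])
  have heq : f (β x) * βd x = g x :=
    (uniqueDiffOn_Icc hlt x hx).eq_deriv _ hc' (hG.hasDeriv x hx)
  have hpos := hβd_pos x hx'
  have hg := hG.density_pos x hx
  have hfo := hfoc x hx'
  have hA : Afun M p (G x) ≠ 0 := by
    intro h
    rw [h, div_zero] at hfo
    exact hpos.ne' hfo
  have hfne : f (β x) ≠ 0 := by
    intro h
    rw [h, zero_mul] at heq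
    exact hg.ne heq
  rw [eq_div_iff hA] at hfo
  have h1 : Afun M p (G x) = (x - β x) * f (β x) := by
    apply mul_left_cancel₀ hpos.ne'
    rw [hfo, ← heq]; ring
  rw [h1, mul_div_cancel_right₀ _ hfne]
  ring
end
end

section
/- Under Assumption 1 on the value distribution and non-degenerate beliefs, suppose β : [v̲, v̄] → ℝ is continuously differentiable, strictly increasing with β'(v) > 0 on (v̲, v̄], and satisfies the first-order condition β'(v) = (v − β(v))·g(v)/A(G(v)) for all v ∈ (v̲, v̄]. Let Q(u) = β(G⁻¹(u)) be the bid quantile function and q(u) = Q'(u) the bid quantile density. Then for every u ∈ (0,1], the value quantile function satisfies G⁻¹(u) = Q(u) + A(u)·q(u). (Identification equation (iden2) in quantile form.) -/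
open MeasureTheory Set Filter

noncomputable section

/-- Identification equation (iden2) in quantile form: with bid quantile function
`Q(u) = β(G⁻¹(u))` and bid quantile density `q = Q'`, the value quantile function
satisfies `G⁻¹(u) = Q(u) + A(u) q(u)` for every `u ∈ (0,1]`. -/
theorem quantile_identification
    (M : ℕ) (p : ℕ → ℝ) (hM : 2 ≤ M) (hbel : Beliefs M p)
    (G g : ℝ → ℝ) (vlo vhi : ℝ) (hG : Assumption1 G g vlo vhi)
    (β βd : ℝ → ℝ)
    (hβderiv : ∀ x ∈ Set.Icc vlo vhi, HasDerivWithinAt β (βd x) (Set.Icc vlo vhi) x)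
    (hβd_cont : ContinuousOn βd (Set.Icc vlo vhi))
    (hβmono : StrictMonoOn β (Set.Icc vlo vhi))
    (hβd_pos : ∀ x ∈ Set.Ioc vlo vhi, 0 < βd x)
    (hfoc : ∀ x ∈ Set.Ioc vlo vhi, βd x = (x - β x) * g x / Afun M p (G x))
    (Ginv : ℝ → ℝ)
    (hGinv_mem : ∀ u ∈ Set.Icc (0 : ℝ) 1, Ginv u ∈ Set.Icc vlo vhi)
    (hGinv_right : ∀ u ∈ Set.Icc (0 : ℝ) 1, G (Ginv u) = u)
    (hGinv_left : ∀ x ∈ Set.Icc vlo vhi, Ginv (G x) = x)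
    (Q : ℝ → ℝ) (hQ : ∀ u, Q u = β (Ginv u)) :
    ∀ u ∈ Set.Ioc (0 : ℝ) 1,
      Ginv u = Q u + Afun M p u * derivWithin Q (Set.Icc 0 1) u := by
  intro u hu
  have huI : u ∈ Icc (0:ℝ) 1 := Ioc_subset_Icc_self hu
  have hx := hGinv_mem u huI
  have hGx := hGinv_right u huI
  have hmono : MonotoneOn Ginv (Icc 0 1) := by
    intro a ha b hb hab
    by_contra hlt
    have h1 := hG.mono (le_of_lt (not_le.mp hlt))
    rw [hGinv_right a ha, hGinv_right b hb] at h1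
    have h2 : a = b := le_antisymm hab h1
    subst h2
    exact hlt le_rfl
  have hGmem : ∀ y, y ∈ Icc vlo vhi → G y ∈ Icc (0:ℝ) 1 := by
    intro y hy
    refine ⟨?_, ?_⟩
    · rw [← hG.eq_zero vlo le_rfl]; exact hG.mono hy.1
    · rw [← hG.eq_one vhi le_rfl]; exact hG.mono hy.2
  have hcont : ContinuousOn Ginv (Icc 0 1) := by
    let f : Icc (0:ℝ) 1 → Icc vlo vhi := fun w => ⟨Ginv w, hGinv_mem w w.2⟩
    have hf : Monotone f := fun a b hab => hmono a.2 b.2 hab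
    have hs : Function.Surjective f := fun y =>
      ⟨⟨G y, hGmem y y.2⟩, Subtype.ext (hGinv_left y y.2)⟩
    have hc : Continuous f := hf.continuous_of_surjective hs
    rw [continuousOn_iff_continuous_restrict]
    exact continuous_subtype_val.comp hc
  have hgpos := hG.density_pos _ hx
  have hxlo : vlo < Ginv u := by
    rcases lt_or_eq_of_le hx.1 with h | h
    · exact h
    · have := hG.eq_zero (Ginv u) h.ge
      rw [hGx] at this
      exact absurd hu.1 (by rw [this]; exact lt_irrefl _)
  have hinv : HasDerivWithinAt Ginv (g (Ginv u))⁻¹ (Icc 0 1) u := by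
    have htend : Tendsto Ginv (nhdsWithin u (Icc 0 1 \ {u}))
        (nhdsWithin (Ginv u) (Icc vlo vhi \ {Ginv u})) := by
      refine tendsto_nhdsWithin_iff.mpr
        ⟨(hcont u huI).mono_left (nhdsWithin_mono _ diff_subset), ?_⟩
      filter_upwards [self_mem_nhdsWithin] with w hw
      refine ⟨hGinv_mem w hw.1, fun h => hw.2 ?_⟩
      have h' : Ginv w = Ginv u := h
      have := congrArg G h'
      rw [hGinv_right w hw.1, hGx] at this
      exact this
    have hd := hasDerivWithinAt_iff_tendsto_slope.mp (hG.hasDeriv _ hx)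
    rw [hasDerivWithinAt_iff_tendsto_slope]
    refine ((hd.comp htend).inv₀ hgpos.ne').congr' ?_
    filter_upwards [self_mem_nhdsWithin] with w hw
    simp only [Function.comp, slope_def_field, hGinv_right w hw.1, hGx, inv_div]
  have hQd : HasDerivWithinAt Q (βd (Ginv u) * (g (Ginv u))⁻¹) (Icc 0 1) u := by
    have hQe : Q = β ∘ Ginv := funext hQ
    rw [hQe]
    exact (hβderiv _ hx).comp u hinv hGinv_mem
  rw [hQd.derivWithin (uniqueDiffOn_Icc zero_lt_one u huI), hQ]
  have hf := hfoc _ ⟨hxlo, hx.2⟩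
  have hp := hβd_pos _ ⟨hxlo, hx.2⟩
  rw [hGx] at hf
  have hA : Afun M p u ≠ 0 := by
    intro h
    rw [h, div_zero] at hf
    exact hp.ne' hf
  rw [hf]
  have := hgpos.ne'
  field_simp
  ring
end
end

section
/- Under Assumption 1 on the value distribution and non-degenerate beliefs, let r* ∈ [v̲, v̄), u* = G(r*), and a ∈ ℝ. Then the potential bidder's expected surplus satisfies both a·∫_{r*}^{v̄} (∫_{r*}^{v} A₁(G(x)) dx)·g(v) dv = a·∫_{r*}^{v̄} A₃(G(x)) dx (the integration-by-parts derivation of the surplus) and the quantile representation a·∫_{r*}^{v̄} A₃(G(x)) dx = −a·A₃(u*)·G⁻¹(u*) − a·∫_{u*}^{1} A₃'(z)·G⁻¹(z) dz. (Quantile form of the potential bidder's expected surplus, Table 1, row 2.) -/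
open MeasureTheory Set Filter

noncomputable section

theorem contDiff_A1_aux (M : ℕ) (p : ℕ → ℝ) : ContDiff ℝ 2 (A1 M p) := by
  unfold A1
  fun_prop

theorem contDiff_A3_aux (M : ℕ) (p : ℕ → ℝ) : ContDiff ℝ 2 (A3 M p) := by
  have := contDiff_A1_aux M p
  unfold A3
  fun_prop

/-- Quantile form of the potential bidder's expected surplus (Table 1, row 2): for
`r* ∈ [v̲, v̄)`, `u* = G(r*)` and any `a`, both
`a ∫_{r*}^{v̄} (∫_{r*}^v A₁(G(x)) dx) g(v) dv = a ∫_{r*}^{v̄} A₃(G(x)) dx` and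
`a ∫_{r*}^{v̄} A₃(G(x)) dx = -a A₃(u*) G⁻¹(u*) - a ∫_{u*}^1 A₃'(z) G⁻¹(z) dz`. -/
theorem potential_bidder_surplus_quantile_form
    (M : ℕ) (p : ℕ → ℝ) (hM : 2 ≤ M) (hbel : Beliefs M p)
    (G g : ℝ → ℝ) (vlo vhi : ℝ) (hG : Assumption1 G g vlo vhi)
    (Ginv : ℝ → ℝ)
    (hGinv_mem : ∀ u ∈ Set.Icc (0 : ℝ) 1, Ginv u ∈ Set.Icc vlo vhi)
    (hGinv_right : ∀ u ∈ Set.Icc (0 : ℝ) 1, G (Ginv u) = u)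
    (hGinv_left : ∀ x ∈ Set.Icc vlo vhi, Ginv (G x) = x)
    (rstar : ℝ) (hrstar : rstar ∈ Set.Ico vlo vhi) (a : ℝ) :
    (a * ∫ v in rstar..vhi, (∫ x in rstar..v, A1 M p (G x)) * g v =
      a * ∫ x in rstar..vhi, A3 M p (G x)) ∧
    (a * ∫ x in rstar..vhi, A3 M p (G x) =
      -(a * A3 M p (G rstar) * Ginv (G rstar)) -
        a * ∫ z in (G rstar)..1, deriv (A3 M p) z * Ginv z) := by
  obtain ⟨hr1, hr2⟩ := hrstar
  have hle : rstar ≤ vhi := hr2.le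
  have hsub : Icc rstar vhi ⊆ Icc vlo vhi := Icc_subset_Icc_left hr1
  have hu : uIcc rstar vhi = Icc rstar vhi := uIcc_of_le hle
  have hGc : ContinuousOn G (Icc rstar vhi) := hG.smooth.continuousOn.mono hsub
  have hgc : ContinuousOn g (Icc rstar vhi) := by
    have h1 := hG.smooth.continuousOn_derivWithin (uniqueDiffOn_Icc hG.lo_lt_hi) (by norm_num)
    refine (h1.congr fun x hx => ?_).mono hsub
    exact ((hG.hasDeriv x hx).derivWithin (uniqueDiffOn_Icc hG.lo_lt_hi x hx)).symm
  have hGd : ∀ x ∈ Ioo rstar vhi, HasDerivAt G (g x) x := fun x hx =>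
    (hG.hasDeriv x (hsub (Ioo_subset_Icc_self hx))).hasDerivAt
      (Icc_mem_nhds (hr1.trans_lt hx.1) hx.2)
  have hG1 : G vhi = 1 := hG.eq_one _ le_rfl
  have hA1 := (contDiff_A1_aux M p).continuous
  have hA3 := contDiff_A3_aux M p
  have hA3' : Continuous (deriv (A3 M p)) := hA3.continuous_deriv (by norm_num)
  have hA1G : ContinuousOn (fun x => A1 M p (G x)) (Icc rstar vhi) := hA1.comp_continuousOn hGc
  have hA1i : IntervalIntegrable (fun x => A1 M p (G x)) volume rstar vhi :=
    ContinuousOn.intervalIntegrable (by rwa [hu])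
  have hgi : IntervalIntegrable g volume rstar vhi :=
    ContinuousOn.intervalIntegrable (by rwa [hu])
  have hmeas : Measurable (fun x => A1 M p (G x)) := hA1.measurable.comp hG.mono.measurable
  constructor
  · congr 1
    have key := intervalIntegral.integral_mul_deriv_eq_deriv_mul_of_hasDerivAt
      (a := rstar) (b := vhi) (u := fun v => ∫ x in rstar..v, A1 M p (G x))
      (v := fun x => G x - 1) (u' := fun x => A1 M p (G x)) (v' := g)
      (intervalIntegral.continuousOn_primitive_interval' hA1i left_mem_uIcc)
      (by rw [hu]; exact hGc.sub continuousOn_const)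
      (by
        rw [min_eq_left hle, max_eq_right hle]
        intro x hx
        refine intervalIntegral.integral_hasDerivAt_right ?_
          hmeas.stronglyMeasurable.stronglyMeasurableAtFilter
          (hA1G.continuousAt (Icc_mem_nhds hx.1 hx.2))
        refine hA1i.mono_set ?_
        rw [hu, uIcc_of_le hx.1.le]
        exact Icc_subset_Icc_right hx.2.le)
      (by
        rw [min_eq_left hle, max_eq_right hle]
        intro x hx
        exact (hGd x hx).sub_const 1)
      hA1i hgi
    rw [key, hG1]
    simp only [sub_self, mul_zero, intervalIntegral.integral_same, zero_mul, zero_sub,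
      ← intervalIntegral.integral_neg]
    refine intervalIntegral.integral_congr fun x _ => ?_
    simp only [A3]
    ring
  · have hcd : ContinuousOn (fun x => deriv (A3 M p) (G x) * g x) (Icc rstar vhi) :=
      (hA3'.comp_continuousOn hGc).mul hgc
    have key := intervalIntegral.integral_mul_deriv_eq_deriv_mul_of_hasDerivAt
      (a := rstar) (b := vhi) (u := fun x => A3 M p (G x))
      (v := fun x => x) (u' := fun x => deriv (A3 M p) (G x) * g x) (v' := fun _ => 1)
      (by rw [hu]; exact hA3.continuous.comp_continuousOn hGc)
      continuousOn_id
      (by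
        rw [min_eq_left hle, max_eq_right hle]
        intro x hx
        exact HasDerivAt.comp x (hA3.differentiable (by norm_num) (G x)).hasDerivAt (hGd x hx))
      (fun x _ => hasDerivAt_id x)
      (ContinuousOn.intervalIntegrable (by rwa [hu])) (by simp)
    have himg : G '' Icc rstar vhi = Icc (G rstar) 1 := by
      rw [hGc.image_Icc_of_monotoneOn hle (hG.mono.monotoneOn _), hG1]
    have hsubst := integral_image_eq_integral_deriv_smul_of_monotoneOn (s := Icc rstar vhi)
      measurableSet_Icc (fun x hx => (hG.hasDeriv x (hsub hx)).mono hsub)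
      (hG.mono.monotoneOn _) (fun z => deriv (A3 M p) z * Ginv z)
    have hGr1 : G rstar ≤ 1 := hG1 ▸ hG.mono hle
    have hz : ∫ z in (G rstar)..1, deriv (A3 M p) z * Ginv z =
        ∫ x in rstar..vhi, deriv (A3 M p) (G x) * g x * x := by
      rw [intervalIntegral.integral_of_le hGr1, intervalIntegral.integral_of_le hle,
        ← integral_Icc_eq_integral_Ioc, ← integral_Icc_eq_integral_Ioc, ← himg, hsubst]
      refine setIntegral_congr_fun measurableSet_Icc fun x hx => ?_
      simp only [smul_eq_mul, hGinv_left x (hsub hx)]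
      ring
    have h0 : A3 M p 1 = 0 := by simp [A3]
    simp only [mul_one] at key
    rw [hz, key, hG1, h0, hGinv_left rstar ⟨hr1, hle⟩]
    ring
end
end

section
/- Let (Z_n) and (Z̃_n) be sequences of real random variables with E Z̃_n ≥ 0, and let r_n → 0 be positive constants such that |Z_n − Z̃_n| = O_P(r_n) (i.e., for every ε > 0 there is a constant B with limsup_n P(|Z_n − Z̃_n| > B·r_n) ≤ ε) and r_n·E Z̃_n → 0. Suppose each Z̃_n satisfies the anti-concentration bound: there is a constant C independent of n such that for every n, every t ∈ ℝ and every ε > 0, P(t < Z̃_n ≤ t + ε) ≤ C·ε·(E Z̃_n + √(1 ∨ log(1/ε))). Then sup_{t ∈ ℝ} |P(Z_n ≤ t) − P(Z̃_n ≤ t)| → 0 as n → ∞. (Lemma 4 of the Appendix: extension of Lemma 2.4 of Chernozhukov–Chetverikov–Kato to generic coupled sequences.) -/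
open MeasureTheory Set Filter

noncomputable section

/-- Lemma 4 of the Appendix (extension of Lemma 2.4 of Chernozhukov–Chetverikov–Kato):
if `|Z_n - Z̃_n| = O_P(r_n)` with `r_n → 0`, `E Z̃_n ≥ 0`, `r_n E Z̃_n → 0`, and each
`Z̃_n` satisfies the Gaussian-type anti-concentration bound with a constant independent
of `n`, then the Kolmogorov distance between `Z_n` and `Z̃_n` tends to zero. -/
theorem kolmogorov_convergence_from_coupling_sequences
    {Ω : ℕ → Type*} [∀ n, MeasurableSpace (Ω n)]
    (P : ∀ n, Measure (Ω n)) [∀ n, IsProbabilityMeasure (P n)]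
    (Z Z' : ∀ n, Ω n → ℝ)
    (hZ : ∀ n, Measurable (Z n)) (hZ' : ∀ n, Measurable (Z' n))
    (hmean_nonneg : ∀ n, 0 ≤ ∫ ω, Z' n ω ∂P n)
    (r : ℕ → ℝ) (hr_pos : ∀ n, 0 < r n) (hr0 : Tendsto r atTop (nhds 0))
    -- |Z_n - Z̃_n| = O_P(r_n)
    (hOP : ∀ ε : ℝ, 0 < ε → ∃ B : ℝ,
      Filter.limsup
        (fun n => ((P n) {ω | B * r n < |Z n ω - Z' n ω|}).toReal) atTop ≤ ε)
    -- r_n · E Z̃_n → 0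
    (hrE : Tendsto (fun n => r n * ∫ ω, Z' n ω ∂P n) atTop (nhds 0))
    -- anti-concentration, uniformly in n
    (hanti : ∃ C : ℝ, ∀ (n : ℕ) (t ε : ℝ), 0 < ε →
      ((P n) {ω | t < Z' n ω ∧ Z' n ω ≤ t + ε}).toReal ≤
        C * ε * ((∫ ω, Z' n ω ∂P n) + Real.sqrt (max 1 (Real.log (1 / ε))))) :
    Tendsto
      (fun n => ⨆ t : ℝ,
        |((P n) {ω | Z n ω ≤ t}).toReal - ((P n) {ω | Z' n ω ≤ t}).toReal|)
      atTop (nhds 0) := by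
  obtain ⟨C, hC⟩ := hanti
  rw [Metric.tendsto_atTop']
  intro δ hδ
  obtain ⟨B, hB⟩ := hOP (δ / 8) (by positivity)
  have hbad : ∀ᶠ n in atTop,
      ((P n) {ω | B * r n < |Z n ω - Z' n ω|}).toReal < δ / 4 := by
    refine eventually_lt_of_limsup_lt (lt_of_le_of_lt hB (by linarith)) ?_
    refine isBoundedUnder_of ⟨1, fun n => ?_⟩
    exact measureReal_le_one
  set b : ℝ := max B 1 with hb
  have hb1 : 1 ≤ b := le_max_right _ _
  have hs0 : Tendsto (fun n => b * r n) atTop (nhds 0) := by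
    simpa using hr0.const_mul b
  have hlog : Tendsto (fun n => |b * r n * Real.log (b * r n)|) atTop (nhds 0) := by
    have h := (Real.continuous_mul_log.tendsto 0).comp hs0
    simpa using h.abs
  have hmaj : Tendsto (fun n => |C| * (b * (r n * ∫ ω, Z' n ω ∂P n) + b * r n
      + |b * r n * Real.log (b * r n)|)) atTop (nhds 0) := by
    simpa using (((hrE.const_mul b).add hs0).add hlog).const_mul |C|
  have hmaj' := hmaj.eventually_lt_const (show (0 : ℝ) < δ / 4 by positivity)
  obtain ⟨N, hN⟩ := eventually_atTop.1 (hbad.and hmaj')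
  refine ⟨N, fun n hn => ?_⟩
  obtain ⟨h1, h2⟩ := hN n hn.le
  set s : ℝ := b * r n with hs
  have hspos : 0 < s := mul_pos (by linarith) (hr_pos n)
  have hBs : B * r n ≤ s := mul_le_mul_of_nonneg_right (le_max_left _ _) (hr_pos n).le
  have hac : ∀ t : ℝ, ((P n) {ω | t < Z' n ω ∧ Z' n ω ≤ t + s}).toReal ≤ δ / 4 := by
    intro t
    refine (hC n t s hspos).trans (le_trans ?_ h2.le)
    have hsq : Real.sqrt (max 1 (Real.log (1 / s))) ≤ 1 + |Real.log s| := by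
      have hm : max 1 (Real.log (1 / s)) ≤ 1 + |Real.log s| := by
        refine max_le (by linarith [abs_nonneg (Real.log s)]) ?_
        rw [one_div, Real.log_inv]
        linarith [neg_le_abs (Real.log s)]
      refine (Real.sqrt_le_left (by positivity)).2 ?_
      nlinarith [abs_nonneg (Real.log s)]
    have hE := hmean_nonneg n
    calc C * s * ((∫ ω, Z' n ω ∂P n) + Real.sqrt (max 1 (Real.log (1 / s))))
        ≤ |C| * s * ((∫ ω, Z' n ω ∂P n) + (1 + |Real.log s|)) := by
          gcongr
          exact le_abs_self C
      _ = _ := by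
          rw [abs_mul, abs_of_pos hspos, hs]; ring
  have key : ∀ t : ℝ,
      |((P n) {ω | Z n ω ≤ t}).toReal - ((P n) {ω | Z' n ω ≤ t}).toReal| ≤ δ / 2 := by
    intro t
    have hu : ∀ A A' D E : Set (Ω n), A ⊆ A' ∪ D ∪ E →
        ((P n) A).toReal ≤ ((P n) A').toReal + ((P n) D).toReal + ((P n) E).toReal := by
      intro A A' D E h
      have e1 := measureReal_mono (μ := P n) h
      have e2 := measureReal_union_le (μ := P n) (A' ∪ D) E
      have e3 := measureReal_union_le (μ := P n) A' D
      simp only [Measure.real] at e1 e2 e3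
      linarith
    have g1 := hu {ω | Z n ω ≤ t} {ω | Z' n ω ≤ t} {ω | t < Z' n ω ∧ Z' n ω ≤ t + s}
      {ω | B * r n < |Z n ω - Z' n ω|} (by
        intro ω hω
        simp only [mem_setOf_eq, mem_union] at hω ⊢
        by_contra! hcon
        obtain ⟨⟨a1, a2⟩, a3⟩ := hcon
        have := a2 a1
        have := neg_le_abs (Z n ω - Z' n ω)
        linarith)
    have g2 := hu {ω | Z' n ω ≤ t} {ω | Z n ω ≤ t}
      {ω | t - s < Z' n ω ∧ Z' n ω ≤ t - s + s}
      {ω | B * r n < |Z n ω - Z' n ω|} (by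
        intro ω hω
        simp only [mem_setOf_eq, mem_union] at hω ⊢
        by_contra! hcon
        obtain ⟨⟨a1, a2⟩, a3⟩ := hcon
        have a4 := le_abs_self (Z n ω - Z' n ω)
        have := a2 (by linarith)
        linarith)
    have := hac t
    have := hac (t - s)
    rw [abs_le]
    constructor <;> linarith
  rw [Real.dist_eq, sub_zero, abs_of_nonneg (Real.iSup_nonneg fun t => abs_nonneg _)]
  exact lt_of_le_of_lt (ciSup_le key) (by linarith)
end
end
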